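/- arXiv:2308.10487 — 5 statements merged into one kernel-verified Lean document; each statement's English description precedes it below -/
import Mathlib

section
/- (Theorem 1, pointwise core inequality.) For every family of per-position predictions g : Fin m → (Fin c → ℝ) such that each g k is a positive probability vector, the per-sequence location-based risk is bounded by the per-sequence NeSy inconsistency plus log a: (1/m) · Σ_{k} (−log (Σ_{j} Q j k · g k j)) ≤ (1/|S|) · Σ_{Y ∈ S} (1/m) · Σ_{k} (−log (g k (Y k))) + Real.log a. -/
/-!
The inequality holds position by position. Fix `k` and let `M = max_j n_j`, so `a = M / |S|`.
Since `n_j ≤ M`, `∑ j, Q j k * g k j ≥ (1 / M) ∑ j, n_{jk} * g k j`, and grouping the sequences of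
`S` by their `k`-th label turns the right side into `a⁻¹` times the average of `g k (Y k)` over
`Y ∈ S`. Taking logarithms and applying Jensen's inequality for the concave `log` to that average
gives the bound at `k` (`neg_log_le_of_avg_le`); averaging over `k` gives the theorem.
-/

/-- If `q` is at least `a⁻¹` times the average of a positive function `f` over `S`, then Jensen's
inequality bounds `-log q` by the average of `-log f` plus `log a`. -/
lemma neg_log_le_of_avg_le {ι : Type*} (S : Finset ι) (hS : S.Nonempty) (f : ι → ℝ)
    (hf : ∀ i, 0 < f i) (a q : ℝ) (ha : 0 < a)
    (hq : a⁻¹ * ∑ i ∈ S, (1 / (S.card : ℝ)) * f i ≤ q) :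
    -Real.log q ≤ (1 / (S.card : ℝ)) * ∑ i ∈ S, -Real.log (f i) + Real.log a := by
  have hc : (0 : ℝ) < S.card := by exact_mod_cast hS.card_pos
  have jensen := strictConcaveOn_log_Ioi.concaveOn.le_map_sum (t := S)
    (w := fun _ => 1 / (S.card : ℝ)) (p := f) (fun _ _ => by positivity)
    (by simp [hc.ne']) (fun i _ => hf i)
  simp only [smul_eq_mul] at jensen
  have havg : 0 < ∑ i ∈ S, (1 / (S.card : ℝ)) * f i :=
    Finset.sum_pos (fun i _ => mul_pos (by positivity) (hf i)) hS
  have hlog := Real.log_le_log (mul_pos (inv_pos.2 ha) havg) hq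
  rw [Real.log_mul (inv_pos.2 ha).ne' havg.ne', Real.log_inv] at hlog
  rw [← Finset.mul_sum] at jensen
  rw [Finset.sum_neg_distrib]
  linarith


/-- Theorem 1 (pointwise core inequality): the per-sequence location-based risk is
bounded by the per-sequence NeSy inconsistency plus `log a`. -/
theorem stmt_0 (c m : ℕ) (hc : 1 ≤ c) (hm : 1 ≤ m)
    (S : Finset (Fin m → Fin c)) (hS : S.Nonempty)
    (n : Fin c → Fin m → ℕ)
    (hn : ∀ j k, n j k = (S.filter (fun Y => Y k = j)).card)
    (N : Fin c → ℕ) (hN : ∀ j, N j = ∑ k, n j k)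
    (hNpos : ∀ j, 0 < N j)
    (Q : Matrix (Fin c) (Fin m) ℝ)
    (hQ : ∀ j k, Q j k = (n j k : ℝ) / (N j : ℝ))
    (a : ℝ) (ha : a = ((Finset.univ.sup N : ℕ) : ℝ) / (S.card : ℝ))
    (g : Fin m → Fin c → ℝ)
    (hg_pos : ∀ k j, 0 < g k j) (hg_sum : ∀ k, ∑ j, g k j = 1) :
    (1 / (m : ℝ)) * ∑ k, (- Real.log (∑ j, Q j k * g k j)) ≤
      (1 / (S.card : ℝ)) * ∑ Y ∈ S, (1 / (m : ℝ)) * ∑ k, (- Real.log (g k (Y k)))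
        + Real.log a := by
  have hS0 : (0 : ℝ) < S.card := by exact_mod_cast hS.card_pos
  have hm0 : (m : ℝ) ≠ 0 := by exact_mod_cast (by omega : m ≠ 0)
  have hle : ∀ j, N j ≤ Finset.univ.sup N := fun j => Finset.le_sup (Finset.mem_univ j)
  have hM : (0 : ℝ) < ((Finset.univ.sup N : ℕ) : ℝ) := by
    exact_mod_cast (hNpos ⟨0, hc⟩).trans_le (hle _)
  have ha0 : 0 < a := ha ▸ div_pos hM hS0
  have hgroup : ∀ k, ∑ Y ∈ S, g k (Y k) = ∑ j, (n j k : ℝ) * g k j := by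
    intro k
    rw [← Finset.sum_fiberwise S (fun Y => Y k)]
    refine Finset.sum_congr rfl fun j _ => ?_
    rw [Finset.sum_congr rfl (g := fun _ => g k j)
      (fun Y hY => by rw [(Finset.mem_filter.1 hY).2]), Finset.sum_const, hn, nsmul_eq_mul]
  have hpos : ∀ k, -Real.log (∑ j, Q j k * g k j) ≤
      (1 / (S.card : ℝ)) * ∑ Y ∈ S, -Real.log (g k (Y k)) + Real.log a := by
    intro k
    refine neg_log_le_of_avg_le S hS (fun Y => g k (Y k)) (fun Y => hg_pos k _) a _ ha0 ?_
    rw [← Finset.mul_sum, hgroup, ← mul_assoc, Finset.mul_sum]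
    refine Finset.sum_le_sum fun j _ => ?_
    have hcoef : a⁻¹ * (1 / (S.card : ℝ)) = 1 / ((Finset.univ.sup N : ℕ) : ℝ) := by
      rw [ha]
      field_simp
    rw [hcoef, hQ, ← mul_assoc, one_div_mul_eq_div]
    have hj : (0 : ℝ) < N j := by exact_mod_cast hNpos j
    have hjM : (N j : ℝ) ≤ ((Finset.univ.sup N : ℕ) : ℝ) := by exact_mod_cast hle j
    have := (hg_pos k j).le
    gcongr
  calc (1 / (m : ℝ)) * ∑ k, (- Real.log (∑ j, Q j k * g k j))
      ≤ (1 / (m : ℝ)) * ∑ k : Fin m,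
          ((1 / (S.card : ℝ)) * ∑ Y ∈ S, -Real.log (g k (Y k)) + Real.log a) := by
        gcongr with k
        exact hpos k
    _ = _ := by
        rw [Finset.sum_add_distrib, ← Finset.mul_sum, Finset.sum_comm, ← Finset.mul_sum,
          Finset.sum_const, Finset.card_univ, Fintype.card_fin, nsmul_eq_mul]
        field_simp
end

section
/- (Theorem 1, expectation form.) With 𝒳 a finite input type, p : (Fin m → 𝒳) → ℝ a probability distribution over input sequences (p X ≥ 0 for all X and Σ_X p X = 1), and ĝ : 𝒳 → (Fin c → ℝ) a classifier whose output at every input is a positive probability vector, the expected location-based risk is bounded by the expected NeSy inconsistency plus log a: Σ_X p X · (1/m) · Σ_{k} (−log (Σ_{j} Q j k · ĝ (X k) j)) ≤ Σ_X p X · (1/|S|) · Σ_{Y ∈ S} (1/m) · Σ_{k} (−log (ĝ (X k) (Y k))) + Real.log a. -/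
/-!
The inequality holds pointwise, for each input sequence `X` and each position `k`. Replacing every
`n_j` by `max_j n_j` in the denominators of `Q` only decreases `∑ j, Q j k * g j`, and
`∑ j, n_{jk} * g j = ∑ Y ∈ S, g (Y k)` by grouping sequences according to their `k`-th label. So
`∑ j, Q j k * g j` is at least `a⁻¹` times the average of `g (Y k)` over `S`
(`inv_mul_mean_le_sum`). Applying `-log`, and Jensen's inequality for the concave logarithm
(`mean_log_le_log_mean`), bounds the location-based loss by the average of `-log (g (Y k))` plus
`log a`. Averaging over the positions and over `p` preserves the constant `log a`.
-/

theorem sum_card_filter_mul {c m : ℕ} (S : Finset (Fin m → Fin c)) (k : Fin m) (g : Fin c → ℝ) :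
    ∑ j, ((S.filter (fun Y => Y k = j)).card : ℝ) * g j = ∑ Y ∈ S, g (Y k) := by
  rw [← Finset.sum_fiberwise S (fun Y => Y k) (fun Y => g (Y k))]
  refine Finset.sum_congr rfl fun j _ => ?_
  rw [Finset.sum_congr rfl (g := fun _ => g j)
    fun Y hY => by rw [(Finset.mem_filter.mp hY).2], Finset.sum_const, nsmul_eq_mul]

/-- With `M ≥ N j` for all `j`, the number `M / |S|` plays the role of the constant `a`. -/
theorem inv_mul_mean_le_sum {c m : ℕ} (S : Finset (Fin m → Fin c)) (hS : S.Nonempty) (k : Fin m)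
    (N : Fin c → ℕ) (hNpos : ∀ j, 0 < N j) (M : ℕ) (hM : ∀ j, N j ≤ M)
    (g : Fin c → ℝ) (hg : ∀ j, 0 < g j) :
    ((M : ℝ) / S.card)⁻¹ * ((1 / (S.card : ℝ)) * ∑ Y ∈ S, g (Y k)) ≤
      ∑ j, ((S.filter (fun Y => Y k = j)).card : ℝ) / (N j : ℝ) * g j := by
  have hs : (S.card : ℝ) ≠ 0 := by exact_mod_cast hS.card_pos.ne'
  have h : ((M : ℝ) / S.card)⁻¹ * ((1 / (S.card : ℝ)) * ∑ Y ∈ S, g (Y k)) =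
      ∑ j, ((S.filter (fun Y => Y k = j)).card : ℝ) / (M : ℝ) * g j := by
    rw [← sum_card_filter_mul, inv_div, ← mul_assoc, Finset.mul_sum]
    refine Finset.sum_congr rfl fun j _ => ?_
    field_simp
  rw [h]
  refine Finset.sum_le_sum fun j _ => mul_le_mul_of_nonneg_right ?_ (hg j).le
  exact div_le_div_of_nonneg_left (Nat.cast_nonneg _) (by exact_mod_cast hNpos j)
    (by exact_mod_cast hM j)

theorem mean_log_le_log_mean {ι : Type*} (S : Finset ι) (hS : S.Nonempty) (f : ι → ℝ)
    (hf : ∀ i ∈ S, 0 < f i) :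
    (1 / (S.card : ℝ)) * ∑ i ∈ S, Real.log (f i) ≤
      Real.log ((1 / (S.card : ℝ)) * ∑ i ∈ S, f i) := by
  have hs : (S.card : ℝ) ≠ 0 := by exact_mod_cast hS.card_pos.ne'
  have h := strictConcaveOn_log_Ioi.concaveOn.le_map_sum (t := S)
    (w := fun _ => 1 / (S.card : ℝ)) (p := f) (fun _ _ => by positivity)
    (by rw [Finset.sum_const, nsmul_eq_mul]; field_simp) (fun i hi => hf i hi)
  simpa only [smul_eq_mul, ← Finset.mul_sum] using h

/-- The bound at a single position `k`, for a single positive vector `g` of class scores. -/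
theorem neg_log_sum_le {c m : ℕ} (S : Finset (Fin m → Fin c)) (hS : S.Nonempty) (k : Fin m)
    (N : Fin c → ℕ) (hNpos : ∀ j, 0 < N j) (M : ℕ) (hM : ∀ j, N j ≤ M)
    (g : Fin c → ℝ) (hg : ∀ j, 0 < g j) :
    -Real.log (∑ j, ((S.filter (fun Y => Y k = j)).card : ℝ) / (N j : ℝ) * g j) ≤
      (1 / (S.card : ℝ)) * ∑ Y ∈ S, (-Real.log (g (Y k))) + Real.log ((M : ℝ) / S.card) := by
  have hs : (0 : ℝ) < S.card := by exact_mod_cast hS.card_pos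
  -- A label of some sequence in `S` witnesses `0 < M`.
  obtain ⟨Y₀, -⟩ := id hS
  have hM0 : (0 : ℝ) < M := by exact_mod_cast (hNpos (Y₀ k)).trans_le (hM _)
  have hmean : 0 < (1 / (S.card : ℝ)) * ∑ Y ∈ S, g (Y k) :=
    mul_pos (by positivity) (Finset.sum_pos (fun Y _ => hg _) hS)
  have ha : 0 < ((M : ℝ) / S.card)⁻¹ := by positivity
  have h1 := Real.log_le_log (mul_pos ha hmean) (inv_mul_mean_le_sum S hS k N hNpos M hM g hg)
  rw [Real.log_mul ha.ne' hmean.ne', Real.log_inv] at h1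
  have h2 := mean_log_le_log_mean S hS (fun Y => g (Y k)) (fun Y _ => hg _)
  rw [Finset.sum_neg_distrib, mul_neg]
  linarith


/-- Theorem 1 (expectation form): the expected location-based risk is bounded by
the expected NeSy inconsistency plus `log a`. -/
theorem stmt_1 (c m : ℕ) (hc : 1 ≤ c) (hm : 1 ≤ m)
    (S : Finset (Fin m → Fin c)) (hS : S.Nonempty)
    (n : Fin c → Fin m → ℕ)
    (hn : ∀ j k, n j k = (S.filter (fun Y => Y k = j)).card)
    (N : Fin c → ℕ) (hN : ∀ j, N j = ∑ k, n j k)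
    (hNpos : ∀ j, 0 < N j)
    (Q : Matrix (Fin c) (Fin m) ℝ)
    (hQ : ∀ j k, Q j k = (n j k : ℝ) / (N j : ℝ))
    (a : ℝ) (ha : a = ((Finset.univ.sup N : ℕ) : ℝ) / (S.card : ℝ))
    (𝒳 : Type*) [Fintype 𝒳]
    (p : (Fin m → 𝒳) → ℝ)
    (hp_nonneg : ∀ X, 0 ≤ p X) (hp_sum : ∑ X, p X = 1)
    (ghat : 𝒳 → Fin c → ℝ)
    (hg_pos : ∀ x j, 0 < ghat x j) (hg_sum : ∀ x, ∑ j, ghat x j = 1) :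
    ∑ X, p X * ((1 / (m : ℝ)) * ∑ k, (- Real.log (∑ j, Q j k * ghat (X k) j))) ≤
      ∑ X, p X * ((1 / (S.card : ℝ)) *
          ∑ Y ∈ S, (1 / (m : ℝ)) * ∑ k, (- Real.log (ghat (X k) (Y k))))
        + Real.log a := by
  have hm0 : (m : ℝ) ≠ 0 := by exact_mod_cast (Nat.one_le_iff_ne_zero.mp hm)
  -- The weights `p` sum to one, so `log a` moves inside the expectation.
  have hlog : Real.log a = ∑ X, p X * Real.log a := by rw [← Finset.sum_mul, hp_sum, one_mul]
  rw [hlog, ← Finset.sum_add_distrib]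
  refine Finset.sum_le_sum fun X _ => ?_
  rw [← mul_add]
  refine mul_le_mul_of_nonneg_left ?_ (hp_nonneg X)
  have key : ∀ k, -Real.log (∑ j, Q j k * ghat (X k) j) ≤
      (1 / (S.card : ℝ)) * ∑ Y ∈ S, (-Real.log (ghat (X k) (Y k))) + Real.log a := by
    intro k
    simp only [hQ, hn, ha]
    exact neg_log_sum_le S hS k N hNpos _ (fun j => Finset.le_sup (Finset.mem_univ j)) _
      (hg_pos (X k))
  calc (1 / (m : ℝ)) * ∑ k, (-Real.log (∑ j, Q j k * ghat (X k) j))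
      ≤ (1 / (m : ℝ)) * ∑ k, ((1 / (S.card : ℝ)) *
          ∑ Y ∈ S, (-Real.log (ghat (X k) (Y k))) + Real.log a) :=
        mul_le_mul_of_nonneg_left (Finset.sum_le_sum fun k _ => key k) (by positivity)
    _ = (1 / (S.card : ℝ)) *
          ∑ Y ∈ S, (1 / (m : ℝ)) * ∑ k, (-Real.log (ghat (X k) (Y k))) + Real.log a := by
        rw [Finset.sum_add_distrib, mul_add, ← Finset.mul_sum, ← Finset.mul_sum,
          Finset.sum_comm, Finset.sum_const, Finset.card_univ, Fintype.card_fin, nsmul_eq_mul,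
          ← mul_assoc (1 / (m : ℝ)) (m : ℝ), one_div_mul_cancel hm0, one_mul, mul_left_comm]
end

section
/- (Theorem 2, pointwise core inequality.) For every target concept t ∈ T and every family of per-position predictions g : Fin m → (Fin c → ℝ) such that each g k is a positive probability vector, the per-sequence target-location-based risk is bounded by the per-sequence expected NeSy inconsistency plus log m − log b: (1/m) · Σ_{k} (−log (Σ_{j} Q̃ j (t,k) · g k j)) ≤ Σ_{Y ∈ S t} (P Y / p_τ t) · (1/m) · Σ_{k} (−log (g k (Y k))) + Real.log m − Real.log b. -/
/-!
Writing `w Y = P Y / pτ t` for the posterior on `S t`, the law seen at position `k` satisfies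
`∑ j, Qt j (t, k) * g k j = ∑ Y ∈ S t, P Y * g k (Y k) / (m * py (Y k))`.
Every label marginal is at most `1`, so this is at least
`(pτ t / m) * ∑ Y ∈ S t, w Y * g k (Y k)`. Jensen's inequality for the concave function `log` moves
the average outside the logarithm, leaving the additive error `log m - log (pτ t)`, which is at most
`log m - log b` because `b ≤ pτ t`. Averaging over `k` gives the theorem.
-/

/-- Jensen's inequality for `log` with unnormalised nonnegative weights `P` of total mass `p`. -/
lemma log_mass_add_avg_log_le {ι : Type*} (s : Finset ι) (P f : ι → ℝ) (p : ℝ)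
    (hP : ∀ i ∈ s, 0 ≤ P i) (hp : p = ∑ i ∈ s, P i) (hp0 : 0 < p) (hf : ∀ i ∈ s, 0 < f i) :
    0 < ∑ i ∈ s, P i * f i ∧
      Real.log p + ∑ i ∈ s, P i / p * Real.log (f i) ≤ Real.log (∑ i ∈ s, P i * f i) := by
  have hw : ∑ i ∈ s, P i / p = 1 := by
    rw [← Finset.sum_div, ← hp, div_self hp0.ne']
  have hpos : 0 < ∑ i ∈ s, P i * f i := by
    obtain ⟨i, hi, hPi⟩ : ∃ i ∈ s, 0 < P i := by
      by_contra! h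
      exact absurd (Finset.sum_nonpos h) (by rw [← hp]; exact not_le.2 hp0)
    exact Finset.sum_pos' (fun i hi => mul_nonneg (hP i hi) (hf i hi).le)
      ⟨i, hi, mul_pos hPi (hf i hi)⟩
  have hJ := strictConcaveOn_log_Ioi.concaveOn.le_map_sum (t := s) (w := fun i => P i / p)
    (p := f) (fun i hi => div_nonneg (hP i hi) hp0.le) hw (fun i hi => hf i hi)
  simp only [smul_eq_mul] at hJ
  have hfac : ∑ i ∈ s, P i / p * f i = (∑ i ∈ s, P i * f i) / p := by
    rw [Finset.sum_div]
    exact Finset.sum_congr rfl fun i _ => by ring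
  rw [hfac, Real.log_div hpos.ne' hp0.ne'] at hJ
  exact ⟨hpos, by linarith⟩

/-- Theorem 2 (pointwise core inequality): the per-sequence target-location-based
risk is bounded by the per-sequence expected NeSy inconsistency plus
`log m - log b`. -/
theorem stmt_4 (c m : ℕ) (hc : 1 ≤ c) (hm : 1 ≤ m)
    (T : Type*) [Fintype T] [Nonempty T]
    (S : T → Finset (Fin m → Fin c))
    (hS_ne : ∀ t, (S t).Nonempty)
    (hS_disj : ∀ t t', t ≠ t' → Disjoint (S t) (S t'))
    (P : (Fin m → Fin c) → ℝ)
    (hP_nonneg : ∀ Y, 0 ≤ P Y)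
    (hP_sum : ∑ t, ∑ Y ∈ S t, P Y = 1)
    (pτ : T → ℝ) (hpτ : ∀ t, pτ t = ∑ Y ∈ S t, P Y)
    (hpτ_pos : ∀ t, 0 < pτ t)
    (b : ℝ) (hb : b = Finset.univ.inf' Finset.univ_nonempty pτ)
    (py : Fin c → ℝ)
    (hpy : ∀ j, py j =
      ∑ t, ∑ Y ∈ S t, P Y * ((Finset.univ.filter (fun k => Y k = j)).card : ℝ) / (m : ℝ))
    (hpy_pos : ∀ j, 0 < py j)
    (Qt : Matrix (Fin c) (T × Fin m) ℝ)
    (hQt : ∀ j t k, Qt j (t, k) =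
      (∑ Y ∈ S t, (if Y k = j then (1 : ℝ) else 0) * P Y) / ((m : ℝ) * py j))
    (t : T)
    (g : Fin m → Fin c → ℝ)
    (hg_pos : ∀ k j, 0 < g k j) (hg_sum : ∀ k, ∑ j, g k j = 1) :
    (1 / (m : ℝ)) * ∑ k, (- Real.log (∑ j, Qt j (t, k) * g k j)) ≤
      ∑ Y ∈ S t, (P Y / pτ t) * ((1 / (m : ℝ)) * ∑ k, (- Real.log (g k (Y k))))
        + Real.log (m : ℝ) - Real.log b := by
  have hm0 : (0 : ℝ) < m := by exact_mod_cast hm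
  have hb_le : b ≤ pτ t := hb ▸ Finset.inf'_le _ (Finset.mem_univ t)
  have hb0 : 0 < b := by
    rw [hb, Finset.lt_inf'_iff]
    exact fun t _ => hpτ_pos t
  have hpy_le : ∀ j, py j ≤ 1 := by
    intro j
    rw [hpy j, ← hP_sum]
    refine Finset.sum_le_sum fun t _ => Finset.sum_le_sum fun Y _ => ?_
    rw [div_le_iff₀ hm0]
    refine mul_le_mul_of_nonneg_left ?_ (hP_nonneg Y)
    exact_mod_cast (Finset.card_le_univ _).trans_eq (Fintype.card_fin m)
  have hmix : ∀ k, ∑ j, Qt j (t, k) * g k j =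
      ∑ Y ∈ S t, P Y * g k (Y k) / ((m : ℝ) * py (Y k)) := by
    intro k
    simp only [hQt, Finset.sum_div, Finset.sum_mul]
    rw [Finset.sum_comm]
    refine Finset.sum_congr rfl fun Y _ => ?_
    rw [Finset.sum_eq_single (Y k)]
    · rw [if_pos rfl]; ring
    · intro j _ hj
      rw [if_neg (Ne.symm hj)]; ring
    · simp
  have hpoint : ∀ k, - Real.log (∑ j, Qt j (t, k) * g k j) ≤
      ∑ Y ∈ S t, P Y / pτ t * (- Real.log (g k (Y k))) + (Real.log m - Real.log b) := by
    intro k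
    obtain ⟨hpos, hJ⟩ := log_mass_add_avg_log_le (S t) P (fun Y => g k (Y k)) (pτ t)
      (fun Y _ => hP_nonneg Y) (hpτ t) (hpτ_pos t) (fun Y _ => hg_pos k (Y k))
    have hle : (∑ Y ∈ S t, P Y * g k (Y k)) / m ≤ ∑ j, Qt j (t, k) * g k j := by
      rw [hmix, Finset.sum_div]
      refine Finset.sum_le_sum fun Y _ => ?_
      exact div_le_div_of_nonneg_left (mul_nonneg (hP_nonneg Y) (hg_pos k _).le)
        (mul_pos hm0 (hpy_pos _)) (mul_le_of_le_one_right hm0.le (hpy_le _))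
    have hlog := Real.log_le_log (div_pos hpos hm0) hle
    rw [Real.log_div hpos.ne' hm0.ne'] at hlog
    have hlogb := Real.log_le_log hb0 hb_le
    simp only [mul_neg, Finset.sum_neg_distrib]
    linarith
  calc (1 / (m : ℝ)) * ∑ k, (- Real.log (∑ j, Qt j (t, k) * g k j))
      ≤ (1 / (m : ℝ)) * ∑ k, (∑ Y ∈ S t, P Y / pτ t * (- Real.log (g k (Y k)))
          + (Real.log m - Real.log b)) :=
        mul_le_mul_of_nonneg_left (Finset.sum_le_sum fun k _ => hpoint k) (by positivity)
    _ = (1 / (m : ℝ)) * ∑ k, ∑ Y ∈ S t, P Y / pτ t * (- Real.log (g k (Y k)))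
          + (Real.log m - Real.log b) := by
        rw [Finset.sum_add_distrib, Finset.sum_const, Finset.card_univ, Fintype.card_fin,
          nsmul_eq_mul]
        field_simp
    _ = _ := by
        rw [Finset.sum_comm, Finset.mul_sum, add_sub_assoc]
        congr 1
        refine Finset.sum_congr rfl fun Y _ => ?_
        rw [← Finset.mul_sum]
        ring
end

section
/- (Theorem 2, expectation form.) Let 𝒳 be a finite input type and π : (Fin m → 𝒳) × T → ℝ a joint probability distribution over input sequences and target concepts (π(X,t) ≥ 0, Σ_{(X,t)} π(X,t) = 1) whose T-marginal matches the generative model, i.e. Σ_X π(X,t) = p_τ t for every t. Let ĝ : 𝒳 → (Fin c → ℝ) be a classifier whose output at every input is a positive probability vector. Then the target-location-based risk is bounded by the NeSy inconsistency risk plus log m − log b: Σ_{(X,t)} π(X,t) · (1/m) · Σ_{k} (−log (Σ_{j} Q̃ j (t,k) · ĝ (X k) j)) ≤ Σ_{(X,t)} π(X,t) · Σ_{Y ∈ S t} (P Y / p_τ t) · (1/m) · Σ_{k} (−log (ĝ (X k) (Y k))) + Real.log m − Real.log b. -/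
/-!
The bound holds pointwise in `(X, t)` and for each position `k`. Since `Q̃` divides by
`m * p_y j ≤ m`, one has
`∑ j, Q̃ j (t, k) * ĝ (X k) j ≥ (p_τ t / m) * ∑ Y ∈ S t, (P Y / p_τ t) * ĝ (X k) (Y k)`,
and `p_τ t ≥ b`. Taking logarithms and applying Jensen's inequality to the concave function `log`
and the posterior weights `P Y / p_τ t` (`log_add_le_of_weighted_sum_le`) bounds each
target-location loss by the posterior mean of `-log (ĝ (X k) (Y k))` plus `log m - log b`;
averaging over `k` and over `π` gives the claim.
-/

/-- Jensen's inequality for `log`, with a multiplicative slack factor `C`. -/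
lemma log_add_le_of_weighted_sum_le {ι : Type*} (s : Finset ι) (w a : ι → ℝ) (C z : ℝ)
    (hw : ∀ i ∈ s, 0 ≤ w i) (hw1 : ∑ i ∈ s, w i = 1) (ha : ∀ i ∈ s, 0 < a i)
    (hC : 0 < C) (hz : C * ∑ i ∈ s, w i * a i ≤ z) :
    Real.log C + ∑ i ∈ s, w i * Real.log (a i) ≤ Real.log z := by
  have hJ := strictConcaveOn_log_Ioi.concaveOn.le_map_sum hw hw1 ha
  have hpos : 0 < ∑ i ∈ s, w i * a i := by
    simpa using (convex_Ioi (0 : ℝ)).sum_mem hw hw1 ha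
  simp only [smul_eq_mul] at hJ
  calc Real.log C + ∑ i ∈ s, w i * Real.log (a i)
      ≤ Real.log C + Real.log (∑ i ∈ s, w i * a i) := by gcongr
    _ = Real.log (C * ∑ i ∈ s, w i * a i) := (Real.log_mul hC.ne' hpos.ne').symm
    _ ≤ Real.log z := Real.log_le_log (mul_pos hC hpos) hz


/-- Theorem 2 (expectation form): the target-location-based risk is bounded by
the NeSy inconsistency risk plus `log m - log b`. -/
theorem stmt_5 (c m : ℕ) (hc : 1 ≤ c) (hm : 1 ≤ m)
    (T : Type*) [Fintype T] [Nonempty T]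
    (S : T → Finset (Fin m → Fin c))
    (hS_ne : ∀ t, (S t).Nonempty)
    (hS_disj : ∀ t t', t ≠ t' → Disjoint (S t) (S t'))
    (P : (Fin m → Fin c) → ℝ)
    (hP_nonneg : ∀ Y, 0 ≤ P Y)
    (hP_sum : ∑ t, ∑ Y ∈ S t, P Y = 1)
    (pτ : T → ℝ) (hpτ : ∀ t, pτ t = ∑ Y ∈ S t, P Y)
    (hpτ_pos : ∀ t, 0 < pτ t)
    (b : ℝ) (hb : b = Finset.univ.inf' Finset.univ_nonempty pτ)
    (py : Fin c → ℝ)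
    (hpy : ∀ j, py j =
      ∑ t, ∑ Y ∈ S t, P Y * ((Finset.univ.filter (fun k => Y k = j)).card : ℝ) / (m : ℝ))
    (hpy_pos : ∀ j, 0 < py j)
    (Qt : Matrix (Fin c) (T × Fin m) ℝ)
    (hQt : ∀ j t k, Qt j (t, k) =
      (∑ Y ∈ S t, (if Y k = j then (1 : ℝ) else 0) * P Y) / ((m : ℝ) * py j))
    (𝒳 : Type*) [Fintype 𝒳]
    (π : (Fin m → 𝒳) × T → ℝ)
    (hπ_nonneg : ∀ Xt, 0 ≤ π Xt)
    (hπ_sum : ∑ Xt, π Xt = 1)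
    (hπ_marg : ∀ t, ∑ X, π (X, t) = pτ t)
    (ghat : 𝒳 → Fin c → ℝ)
    (hg_pos : ∀ x j, 0 < ghat x j) (hg_sum : ∀ x, ∑ j, ghat x j = 1) :
    ∑ Xt : (Fin m → 𝒳) × T, π Xt *
        ((1 / (m : ℝ)) * ∑ k, (- Real.log (∑ j, Qt j (Xt.2, k) * ghat (Xt.1 k) j))) ≤
      ∑ Xt : (Fin m → 𝒳) × T, π Xt *
          (∑ Y ∈ S Xt.2, (P Y / pτ Xt.2) *
            ((1 / (m : ℝ)) * ∑ k, (- Real.log (ghat (Xt.1 k) (Y k)))))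
        + Real.log (m : ℝ) - Real.log b := by
  have hm0 : (0 : ℝ) < m := by exact_mod_cast hm
  have hb_le : ∀ t, b ≤ pτ t := fun t => hb ▸ Finset.inf'_le _ (Finset.mem_univ t)
  have hb_pos : 0 < b := by
    rw [hb, Finset.lt_inf'_iff]
    exact fun t _ => hpτ_pos t
  have hpy_le : ∀ j, py j ≤ 1 := by
    intro j
    rw [hpy, ← hP_sum]
    refine Finset.sum_le_sum fun t _ => Finset.sum_le_sum fun Y _ => ?_
    rw [div_le_iff₀ hm0]
    refine mul_le_mul_of_nonneg_left ?_ (hP_nonneg Y)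
    have := Finset.card_filter_le (Finset.univ : Finset (Fin m)) (fun k => Y k = j)
    rw [Finset.card_univ, Fintype.card_fin] at this
    exact_mod_cast this
  have hw_nonneg : ∀ t Y, 0 ≤ P Y / pτ t := fun t Y => div_nonneg (hP_nonneg Y) (hpτ_pos t).le
  have hw_sum : ∀ t, ∑ Y ∈ S t, P Y / pτ t = 1 := by
    intro t
    rw [← Finset.sum_div, ← hpτ, div_self (hpτ_pos t).ne']
  have hmix : ∀ (t : T) (k : Fin m) (g : Fin c → ℝ), (∀ j, 0 < g j) →
      b / m * ∑ Y ∈ S t, P Y / pτ t * g (Y k) ≤ ∑ j, Qt j (t, k) * g j := by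
    intro t k g hg
    have hsum_nonneg : 0 ≤ ∑ Y ∈ S t, P Y / pτ t * g (Y k) :=
      Finset.sum_nonneg fun Y _ => mul_nonneg (hw_nonneg t Y) (hg _).le
    calc b / m * ∑ Y ∈ S t, P Y / pτ t * g (Y k)
        ≤ pτ t / m * ∑ Y ∈ S t, P Y / pτ t * g (Y k) := by
          have := hb_le t
          gcongr
      _ = ∑ j, (∑ Y ∈ S t, (if Y k = j then (1 : ℝ) else 0) * P Y) / m * g j := by
          simp only [Finset.sum_div, Finset.sum_mul, Finset.mul_sum]
          rw [Finset.sum_comm]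
          refine Finset.sum_congr rfl fun Y _ => ?_
          rw [Finset.sum_eq_single (Y k)]
          · have := (hpτ_pos t).ne'
            simp only [if_true]
            field_simp
          · intro j _ hj
            simp [hj.symm]
          · simp
      _ ≤ ∑ j, Qt j (t, k) * g j := by
          refine Finset.sum_le_sum fun j _ => mul_le_mul_of_nonneg_right ?_ (hg j).le
          rw [hQt]
          refine div_le_div_of_nonneg_left ?_ (mul_pos hm0 (hpy_pos j))
            (mul_le_of_le_one_right hm0.le (hpy_le j))
          exact Finset.sum_nonneg fun Y _ =>
            mul_nonneg (by split_ifs <;> norm_num) (hP_nonneg Y)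
  have hpt : ∀ Xt : (Fin m → 𝒳) × T,
      (1 / (m : ℝ)) * ∑ k, (- Real.log (∑ j, Qt j (Xt.2, k) * ghat (Xt.1 k) j)) ≤
        (∑ Y ∈ S Xt.2, (P Y / pτ Xt.2) *
          ((1 / (m : ℝ)) * ∑ k, (- Real.log (ghat (Xt.1 k) (Y k)))))
        + (Real.log (m : ℝ) - Real.log b) := by
    rintro ⟨X, t⟩
    have hk : ∀ k, - Real.log (∑ j, Qt j (t, k) * ghat (X k) j) ≤
        (∑ Y ∈ S t, P Y / pτ t * (- Real.log (ghat (X k) (Y k))))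
          + (Real.log (m : ℝ) - Real.log b) := by
      intro k
      have h := log_add_le_of_weighted_sum_le (S t) (fun Y => P Y / pτ t)
        (fun Y => ghat (X k) (Y k)) (b / m) _ (fun Y _ => hw_nonneg t Y) (hw_sum t)
        (fun Y _ => hg_pos _ _) (div_pos hb_pos hm0) (hmix t k (ghat (X k)) (hg_pos _))
      rw [Real.log_div hb_pos.ne' hm0.ne'] at h
      simp only [mul_neg, Finset.sum_neg_distrib]
      linarith
    calc (1 / (m : ℝ)) * ∑ k, (- Real.log (∑ j, Qt j (t, k) * ghat (X k) j))
        ≤ (1 / (m : ℝ)) * ∑ k : Fin m,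
            ((∑ Y ∈ S t, P Y / pτ t * (- Real.log (ghat (X k) (Y k))))
              + (Real.log (m : ℝ) - Real.log b)) := by
          gcongr with k
          exact hk k
      _ = _ := by
          rw [Finset.sum_add_distrib, mul_add, Finset.sum_comm]
          congr 1
          · simp only [Finset.mul_sum]
            refine Finset.sum_congr rfl fun Y _ => Finset.sum_congr rfl fun k _ => ?_
            ring
          · simp only [Finset.sum_const, Finset.card_univ, Fintype.card_fin, nsmul_eq_mul]
            field_simp
  calc _ ≤ ∑ Xt : (Fin m → 𝒳) × T, π Xt *
        ((∑ Y ∈ S Xt.2, (P Y / pτ Xt.2) *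
          ((1 / (m : ℝ)) * ∑ k, (- Real.log (ghat (Xt.1 k) (Y k)))))
        + (Real.log (m : ℝ) - Real.log b)) :=
        Finset.sum_le_sum fun Xt _ => mul_le_mul_of_nonneg_left (hpt Xt) (hπ_nonneg Xt)
    _ = _ := by
        simp only [mul_add, Finset.sum_add_distrib]
        rw [← Finset.sum_mul, hπ_sum]
        ring
end

section
/- (Theorem 3, full form: the minimiser of the TL-Risk recovers the true posterior.) Let M : Matrix (Fin c) (Fin d) ℝ be a row-stochastic matrix of full row rank (M.rank = c), 𝒳 a finite input type, w : 𝒳 → ℝ an input marginal with w x > 0 for every x and Σ_x w x = 1, and p : 𝒳 → (Fin c → ℝ) the true conditional class distributions, with p x a positive probability vector for every x. Define the target-location-based risk of a classifier g : 𝒳 → (Fin c → ℝ) (with g x a positive probability vector for every x) by R_TL(g) = Σ_x w x · (−Σ_{o} (Σ_{j} M j o · p x j) · log (Σ_{j} M j o · g x j)). Then R_TL(g) ≥ R_TL(p) for every such classifier g, and R_TL(g) = R_TL(p) if and only if g = p. -/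
/-!
For each input `x`, the risk compares the observed distribution `a = Mᵀ (p x)` with the predicted
one `b = Mᵀ (g x)` through the cross-entropy `-∑ o, a o * log (b o)`. Gibbs' inequality
(`gibbs_le`, `gibbs_eq`) says that this is at least the entropy of `a`, with equality only for
`a = b`. As the weights `w x` are positive, equality of the risks forces equality at every `x`, and
full row rank makes `v ↦ Mᵀ v` injective (`vecMul_injective_of_rank_eq`), so `g x = p x`.

If the column `o` of `M` vanishes then `a o = b o = 0`; otherwise positivity of `g x` gives
`0 < b o`. Hence `b o = 0` implies `a o = 0`, which is the absolute continuity that Gibbs'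
inequality needs in the presence of the convention `Real.log 0 = 0`.
-/

/-- Strict form of the pointwise Gibbs inequality; the difference of the two sides is the Bregman
divergence of `t ↦ t * log t`. -/
lemma sub_lt_mul_log_sub {a b : ℝ} (ha : 0 ≤ a) (hb : 0 ≤ b) (hab : b = 0 → a = 0) (hne : a ≠ b) :
    a - b < a * Real.log a - a * Real.log b := by
  have hb' : 0 < b := lt_of_le_of_ne hb fun h => hne (by rw [hab h.symm, h])
  rcases ha.eq_or_lt with rfl | ha'
  · simpa using hb'
  · have hlt := Real.log_lt_sub_one_of_pos (div_pos hb' ha')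
      (fun h => hne ((div_eq_one_iff_eq ha'.ne').1 h).symm)
    rw [Real.log_div hb'.ne' ha'.ne'] at hlt
    have hmul := mul_lt_mul_of_pos_left hlt ha'
    have hcancel : a * (b / a - 1) = b - a := by field_simp
    linarith

lemma sub_le_mul_log_sub {a b : ℝ} (ha : 0 ≤ a) (hb : 0 ≤ b) (hab : b = 0 → a = 0) :
    a - b ≤ a * Real.log a - a * Real.log b := by
  by_cases h : a = b
  · simp [h]
  · exact (sub_lt_mul_log_sub ha hb hab h).le

/-- Gibbs' inequality: cross-entropy is at least entropy. -/
lemma gibbs_le {ι : Type*} [Fintype ι] {a b : ι → ℝ} (ha : ∀ o, 0 ≤ a o) (hb : ∀ o, 0 ≤ b o)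
    (hab : ∀ o, b o = 0 → a o = 0) (hsum : ∑ o, a o = ∑ o, b o) :
    -∑ o, a o * Real.log (a o) ≤ -∑ o, a o * Real.log (b o) := by
  have h := Finset.sum_le_sum fun o (_ : o ∈ Finset.univ) =>
    sub_le_mul_log_sub (ha o) (hb o) (hab o)
  simp only [Finset.sum_sub_distrib] at h
  linarith

/-- The equality case of Gibbs' inequality. -/
lemma gibbs_eq {ι : Type*} [Fintype ι] {a b : ι → ℝ} (ha : ∀ o, 0 ≤ a o) (hb : ∀ o, 0 ≤ b o)
    (hab : ∀ o, b o = 0 → a o = 0) (hsum : ∑ o, a o = ∑ o, b o)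
    (heq : -∑ o, a o * Real.log (a o) = -∑ o, a o * Real.log (b o)) : a = b := by
  have h := (Finset.sum_eq_sum_iff_of_le fun o (_ : o ∈ Finset.univ) =>
    sub_le_mul_log_sub (ha o) (hb o) (hab o)).1 (by
      simp only [Finset.sum_sub_distrib]
      linarith)
  funext o
  by_contra hne
  exact (sub_lt_mul_log_sub (ha o) (hb o) (hab o) hne).ne (h o (Finset.mem_univ o))

lemma vecMul_injective_of_rank_eq {c d : ℕ} {M : Matrix (Fin c) (Fin d) ℝ} (h : M.rank = c) :
    Function.Injective M.vecMul := by
  rw [Matrix.vecMul_injective_iff, linearIndependent_iff_card_eq_finrank_span, Fintype.card_fin,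
    Set.finrank, ← Matrix.rank_eq_finrank_span_row, h]

/-- Pushing a distribution through a row-stochastic matrix preserves total mass. -/
lemma sum_sum_mul_of_row {c d : ℕ} {M : Matrix (Fin c) (Fin d) ℝ} (hM : ∀ j, ∑ o, M j o = 1)
    (v : Fin c → ℝ) : ∑ o, ∑ j, M j o * v j = ∑ j, v j := by
  rw [Finset.sum_comm]
  simp [← Finset.sum_mul, hM]

/-- Theorem 3 (full form): the minimiser of the TL-Risk recovers the true
conditional class distributions. -/
theorem stmt_7 (c d : ℕ) (hc : 1 ≤ c) (hd : 1 ≤ d)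
    (M : Matrix (Fin c) (Fin d) ℝ)
    (hM_nonneg : ∀ j o, 0 ≤ M j o)
    (hM_row : ∀ j, ∑ o, M j o = 1)
    (hM_rank : M.rank = c)
    (𝒳 : Type*) [Fintype 𝒳]
    (w : 𝒳 → ℝ) (hw_pos : ∀ x, 0 < w x) (hw_sum : ∑ x, w x = 1)
    (p : 𝒳 → Fin c → ℝ)
    (hp_pos : ∀ x j, 0 < p x j) (hp_sum : ∀ x, ∑ j, p x j = 1)
    (g : 𝒳 → Fin c → ℝ)
    (hg_pos : ∀ x j, 0 < g x j) (hg_sum : ∀ x, ∑ j, g x j = 1) :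
    ∑ x, w x * (- ∑ o, (∑ j, M j o * p x j) * Real.log (∑ j, M j o * g x j)) ≥
      ∑ x, w x * (- ∑ o, (∑ j, M j o * p x j) * Real.log (∑ j, M j o * p x j)) ∧
    (∑ x, w x * (- ∑ o, (∑ j, M j o * p x j) * Real.log (∑ j, M j o * g x j)) =
      ∑ x, w x * (- ∑ o, (∑ j, M j o * p x j) * Real.log (∑ j, M j o * p x j)) ↔
        g = p) := by
  have hnonneg : ∀ q : 𝒳 → Fin c → ℝ, (∀ x j, 0 < q x j) → ∀ x o, 0 ≤ ∑ j, M j o * q x j :=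
    fun q hq x o => Finset.sum_nonneg fun j _ => mul_nonneg (hM_nonneg j o) (hq x j).le
  have hac : ∀ x o, ∑ j, M j o * g x j = 0 → ∑ j, M j o * p x j = 0 := by
    intro x o h
    -- A zero predicted probability means that the whole column of `M` vanishes.
    rw [Finset.sum_eq_zero_iff_of_nonneg
      fun j _ => mul_nonneg (hM_nonneg j o) (hg_pos x j).le] at h
    refine Finset.sum_eq_zero fun j hj => ?_
    rw [(mul_eq_zero.1 (h j hj)).resolve_right (hg_pos x j).ne', zero_mul]
  have hmass : ∀ x, ∑ o, ∑ j, M j o * p x j = ∑ o, ∑ j, M j o * g x j := fun x => by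
    rw [sum_sum_mul_of_row hM_row, sum_sum_mul_of_row hM_row, hp_sum, hg_sum]
  have hle := fun x (_ : x ∈ Finset.univ) => mul_le_mul_of_nonneg_left
    (gibbs_le (hnonneg p hp_pos x) (hnonneg g hg_pos x) (hac x) (hmass x)) (hw_pos x).le
  refine ⟨Finset.sum_le_sum hle, fun heq => ?_, fun h => by rw [h]⟩
  have hpt := (Finset.sum_eq_sum_iff_of_le hle).1 heq.symm
  funext x
  have hobs := gibbs_eq (hnonneg p hp_pos x) (hnonneg g hg_pos x) (hac x) (hmass x)
    (mul_left_cancel₀ (hw_pos x).ne' (hpt x (Finset.mem_univ x)))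
  apply vecMul_injective_of_rank_eq hM_rank
  funext o
  simpa [Matrix.vecMul, dotProduct, mul_comm] using (congrFun hobs o).symm
end
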